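/- If (L,N) is graphically admissible, then A and Y are not adjacent in H^1. -/

import Mathlib

open Relation Set

namespace CausalGraph

variable {V : Type*} [Fintype V] [DecidableEq V]

/-- `p` is a path in the undirected sense from `u` to `v` along adjacency `Adj`:
a nonempty list of pairwise distinct vertices, consecutive ones adjacent,
starting at `u` and ending at `v`. -/
def IsPath (Adj : V → V → Prop) (u v : V) (p : List V) : Prop :=
  List.Chain' Adj p ∧ p.head? = some u ∧ p.getLast? = some v ∧ p.Nodup

/-- Ancestors of `S` in the digraph `D` (every vertex is an ancestor of itself). -/
def anc (D : V → V → Prop) (S : Set V) : Set V :=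
  {u | ∃ v ∈ S, Relation.ReflTransGen D u v}

/-- Descendants of `S` in the digraph `D` (every vertex is a descendant of itself). -/
def desc (D : V → V → Prop) (S : Set V) : Set V :=
  {u | ∃ v ∈ S, Relation.ReflTransGen D v u}

/-- Parents of vertices of `S` in the digraph `D`. -/
def parents (D : V → V → Prop) (S : Set V) : Set V :=
  {u | ∃ v ∈ S, D u v}

/-- The digraph `D` is acyclic. -/
def Acyclic (D : V → V → Prop) : Prop :=
  ∀ u v, D u v → ¬ Relation.ReflTransGen D v u

/-- Vertices other than `A` lying on a directed path from `A` to `Y`. -/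
def cn (D : V → V → Prop) (A Y : V) : Set V :=
  {v | v ≠ A ∧ Relation.ReflTransGen D A v ∧ Relation.ReflTransGen D v Y}

/-- The forbidden set. -/
def forb (D : V → V → Prop) (A Y : V) : Set V :=
  desc D (cn D A Y) ∪ {A}

/-- Proper back-door graph: delete every edge from `A` into `cn D A Y`. -/
def pbd (D : V → V → Prop) (A Y : V) : V → V → Prop :=
  fun u v => D u v ∧ ¬(u = A ∧ v ∈ cn D A Y)

/-- `y` is an interior vertex of the list `p` with neighbours `x` and `z` on the path. -/
def InteriorAt (p : List V) (x y z : V) : Prop :=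
  ∃ s t : List V, p = s ++ x :: y :: z :: t

/-- The path `p` is blocked by `Z` in the digraph `D`: some interior non-collider
lies in `Z`, or some interior collider has no descendant in `Z`. -/
def Blocked (D : V → V → Prop) (Z : Set V) (p : List V) : Prop :=
  (∃ x y z, InteriorAt p x y z ∧ ¬(D x y ∧ D z y) ∧ y ∈ Z) ∨
  (∃ x y z, InteriorAt p x y z ∧ (D x y ∧ D z y) ∧ ∀ d ∈ desc D {y}, d ∉ Z)

/-- d-separation of `S` and `T` given `Z` in the digraph `D`. -/
def DSep (D : V → V → Prop) (S T Z : Set V) : Prop :=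
  ∀ s ∈ S, ∀ t ∈ T, ∀ p : List V,
    IsPath (fun a b => D a b ∨ D b a) s t p → Blocked D Z p

/-- Moral graph of the subgraph of the digraph `D` induced on `Vs`. -/
def moral (D : V → V → Prop) (Vs : Set V) : SimpleGraph V :=
  SimpleGraph.fromRel (fun u v =>
    u ∈ Vs ∧ v ∈ Vs ∧ (D u v ∨ D v u ∨ ∃ w ∈ Vs, D u w ∧ D v w))

/-- Separation in an undirected graph: every path from `S` to `T` meets `W`. -/
def USep (H : SimpleGraph V) (S T W : Set V) : Prop :=
  ∀ s ∈ S, ∀ t ∈ T, ∀ p : List V, IsPath H.Adj s t p → ∃ z ∈ W, z ∈ p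

/-- `Z` is an `A`–`Y` cut in an undirected graph `H` with vertex set `Vs`. -/
def IsCut (Vs : Set V) (H : SimpleGraph V) (A Y : V) (Z : Set V) : Prop :=
  Z ⊆ Vs ∧ Z ∩ {A, Y} = ∅ ∧ ∀ p : List V, IsPath H.Adj A Y p → ∃ z ∈ Z, z ∈ p

def MinimalCut (Vs : Set V) (H : SimpleGraph V) (A Y : V) (Z : Set V) : Prop :=
  IsCut Vs H A Y Z ∧ ∀ Z' ⊂ Z, ¬ IsCut Vs H A Y Z'

def MinimumCut (Vs : Set V) (H : SimpleGraph V) (A Y : V) (Z : Set V) : Prop :=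
  IsCut Vs H A Y Z ∧ ∀ Z', IsCut Vs H A Y Z' → Z.ncard ≤ Z'.ncard

/-- Connected component of `y` in `H` restricted to the complement of `U`:
vertices reachable from `y` by paths avoiding `U`. -/
def cc (H : SimpleGraph V) (U : Set V) (y : V) : Set V :=
  {w | ∃ p : List V, IsPath H.Adj y w p ∧ ∀ x ∈ p, x ∉ U}

/-- Boundary of `S` in `H`: vertices outside `S` adjacent to some vertex of `S`. -/
def bdry (H : SimpleGraph V) (S : Set V) : Set V :=
  {v | v ∉ S ∧ ∃ u ∈ S, H.Adj v u}

/-- The partial order `Z₁ ⊴_H Z₂` between `A`–`Y` cuts. -/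
def TLE (H : SimpleGraph V) (A Y : V) (Z₁ Z₂ : Set V) : Prop :=
  USep H {Y} (Z₂ \ Z₁) Z₁ ∧ USep H {A} (Z₁ \ Z₂) Z₂

/-- Ancestors of `{A, Y} ∪ L`. -/
def ancAYL (D : V → V → Prop) (A Y : V) (L : Set V) : Set V :=
  anc D ({A, Y} ∪ L)

/-- The moral graph `H⁰` of the proper back-door graph induced on `an_G({A,Y} ∪ L)`. -/
def H0 (D : V → V → Prop) (A Y : V) (L : Set V) : SimpleGraph V :=
  moral (pbd D A Y) (ancAYL D A Y L)

/-- The set of vertices removed from `H⁰` when constructing `H¹`. -/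
def Ignore (D : V → V → Prop) (A Y : V) (L N : Set V) : Set V :=
  (ancAYL D A Y L \ {A, Y}) ∩ ((Set.univ \ N) ∪ forb D A Y)

/-- Vertex set of `H¹`. -/
def H1verts (D : V → V → Prop) (A Y : V) (L N : Set V) : Set V :=
  ancAYL D A Y L \ Ignore D A Y L N

/-- The non-parametric adjustment efficiency graph `H¹`: delete the vertices of
`Ignore`, join two remaining vertices if they are joined in `H⁰` by a path all of
whose intermediate vertices are in `Ignore`, and join `A` and `Y` to every vertex
of `L`. -/
def H1 (D : V → V → Prop) (A Y : V) (L N : Set V) : SimpleGraph V :=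
  SimpleGraph.fromRel (fun u v =>
    u ∈ H1verts D A Y L N ∧ v ∈ H1verts D A Y L N ∧
      ((∃ p : List V, IsPath (H0 D A Y L).Adj u v p ∧
          ∀ x ∈ p, x ≠ u → x ≠ v → x ∈ Ignore D A Y L N) ∨
        (u = A ∧ v ∈ L) ∨ (u = Y ∧ v ∈ L)))

/-- The graphical adjustment criterion for `A, Y, L, N` in the DAG `D`. -/
def GAC (D : V → V → Prop) (A Y : V) (L N Z : Set V) : Prop :=
  DSep (pbd D A Y) {A} {Y} Z ∧ Z ∩ forb D A Y = ∅ ∧ L ⊆ Z ∧ Z ⊆ N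

def MinimalGAC (D : V → V → Prop) (A Y : V) (L N Z : Set V) : Prop :=
  GAC D A Y L N Z ∧ ∀ Z' ⊂ Z, ¬ GAC D A Y L N Z'

def MinimumGAC (D : V → V → Prop) (A Y : V) (L N Z : Set V) : Prop :=
  GAC D A Y L N Z ∧ ∀ Z', GAC D A Y L N Z' → Z.ncard ≤ Z'.ncard

/-- Graphical admissibility of the pair `(L, N)`. -/
def Admissible (D : V → V → Prop) (A Y : V) (L N : Set V) : Prop :=
  ∃ Z, GAC D A Y L N Z

end CausalGraph

namespace CausalGraph

/-- Bayes-ball reachability from `A`; the flag says whether the last edge points into the vertex. -/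
inductive Ball {V : Type*} (D : V → V → Prop) (Z : Set V) (A : V) : V → Bool → Prop
  | start : Ball D Z A A false
  | down {v w : V} {b : Bool} : Ball D Z A v b → v ∉ Z → D v w → Ball D Z A w true
  | upF {v w : V} : Ball D Z A v false → v ∉ Z → D w v → Ball D Z A w false
  | upT {v w : V} : Ball D Z A v true → v ∈ anc D Z → D w v → Ball D Z A w false

def TCond {V : Type*} (D : V → V → Prop) (Z : Set V) (x y z : V) : Prop :=
  (D x y ∧ D z y ∧ y ∈ anc D Z) ∨ (¬(D x y ∧ D z y) ∧ y ∉ Z)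

def OW {V : Type*} (D : V → V → Prop) (Z : Set V) (w : ℕ → V) (n : ℕ) : Prop :=
  (∀ i, i < n → (D (w i) (w (i+1)) ∨ D (w (i+1)) (w i))) ∧
  ∀ i, i + 2 ≤ n → TCond D Z (w i) (w (i+1)) (w (i+2))

theorem OW.snoc {V : Type*} {D : V → V → Prop} {Z : Set V} {w : ℕ → V} {n : ℕ}
    (h : OW D Z w n) (x : V) (hx : D (w n) x ∨ D x (w n))
    (hc : ∀ m, n = m + 1 → TCond D Z (w m) (w n) x) :
    OW D Z (fun k => if k ≤ n then w k else x) (n+1) := by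
  constructor
  · intro i hi
    rcases Nat.lt_or_ge i n with h1 | h1
    · have a : i ≤ n := by omega
      have b : i + 1 ≤ n := by omega
      simp only [a, b, if_true]
      exact h.1 i h1
    · have : i = n := by omega
      subst this
      simpa using hx
  · intro i hi
    have a : i ≤ n := by omega
    have b : i + 1 ≤ n := by omega
    rcases Nat.lt_or_ge n (i+2) with h1 | h1
    · have c : ¬ (i + 2 ≤ n) := by omega
      have e : n = i + 1 := by omega
      simp only [a, b, c, if_true, if_false]
      have := hc i e
      rwa [e] at this
    · simp only [a, b, h1, if_true]
      exact h.2 i h1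

theorem Ball.walk {V : Type*} {D : V → V → Prop} {Z : Set V} {A v : V} {b : Bool}
    (hac : ∀ x y, D x y → ¬ D y x) (h : Ball D Z A v b) :
    ∃ (n : ℕ) (w : ℕ → V), w 0 = A ∧ w n = v ∧ OW D Z w n ∧
      ∀ m, n = m + 1 → ((b = true → D (w m) v) ∧ (b = false → D v (w m))) := by
  induction h with
  | start =>
    refine ⟨0, fun _ => A, rfl, rfl, ⟨?_, ?_⟩, ?_⟩
    · intro i hi; omega
    · intro i hi; omega
    · intro m hm; omega
  | @down v x b h hv hd ih =>
    obtain ⟨n, w, h0, hn, ho, hl⟩ := ih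
    refine ⟨n+1, _, ?_, ?_, ho.snoc x (Or.inl (hn ▸ hd)) ?_, ?_⟩
    · simpa using h0
    · simp
    · intro m hm
      rw [hn]
      right
      exact ⟨fun hh => hac _ _ hd hh.2, hv⟩
    · intro m hm
      have : n = m := by omega
      subst this
      simp [hn, hd]
  | @upF v x h hv hd ih =>
    obtain ⟨n, w, h0, hn, ho, hl⟩ := ih
    refine ⟨n+1, _, ?_, ?_, ho.snoc x (Or.inr (hn ▸ hd)) ?_, ?_⟩
    · simpa using h0
    · simp
    · intro m hm
      rw [hn]
      right
      exact ⟨fun hh => hac _ _ hh.1 ((hl m hm).2 rfl), hv⟩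
    · intro m hm
      have : n = m := by omega
      subst this
      simp [hn, hd]
  | @upT v x h hv hd ih =>
    obtain ⟨n, w, h0, hn, ho, hl⟩ := ih
    refine ⟨n+1, _, ?_, ?_, ho.snoc x (Or.inr (hn ▸ hd)) ?_, ?_⟩
    · simpa using h0
    · simp
    · intro m hm
      rw [hn]
      left
      exact ⟨(hl m hm).1 rfl, hd, hv⟩
    · intro m hm
      have : n = m := by omega
      subst this
      simp [hn, hd]

theorem anc_step {V : Type*} {D : V → V → Prop} {Z : Set V} {u v : V}
    (h : ReflTransGen D u v) (hv : v ∈ anc D Z) : u ∈ anc D Z := by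
  obtain ⟨z, hz, hr⟩ := hv
  exact ⟨z, hz, h.trans hr⟩

theorem mem_anc_self {V : Type*} {D : V → V → Prop} {Z : Set V} {u : V}
    (h : u ∈ Z) : u ∈ anc D Z := ⟨u, h, .refl⟩

theorem Ball.toY {V : Type*} {D : V → V → Prop} {Z : Set V} {A u Y : V}
    (hr : ReflTransGen D u Y) : ∀ b, Ball D Z A u b → u ∉ anc D Z → ∃ b, Ball D Z A Y b := by
  induction hr using ReflTransGen.head_induction_on with
  | refl => intro b h _; exact ⟨b, h⟩
  | head h1 h2 ih =>
    intro b h hn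
    exact ih true (h.down (fun hz => hn (mem_anc_self hz)) h1)
      (fun hz => hn (anc_step (.single h1) hz))

theorem Ball.fromA {V : Type*} {D : V → V → Prop} {Z : Set V} {A u : V}
    (hr : ReflTransGen D u A) : u ∉ anc D Z → Ball D Z A u false := by
  induction hr using ReflTransGen.head_induction_on with
  | refl => intro _; exact .start
  | head h1 h2 ih =>
    intro hn
    have hn' := fun hz => hn (anc_step (.single h1) hz)
    exact (ih hn').upF (fun hz => hn' (mem_anc_self hz)) h1

theorem Ball.up {V : Type*} {D : V → V → Prop} {Z : Set V} {A Y u x : V} {b : Bool}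
    (h : Ball D Z A u b) (hu : u ∈ anc D ({A, Y} ∪ Z)) (hx : D x u) (hb : b = false → u ∉ Z) :
    (∃ b, Ball D Z A Y b) ∨ ∃ b, Ball D Z A x b := by
  by_cases hz : u ∈ anc D Z
  · right
    cases b with
    | false => exact ⟨_, h.upF (hb rfl) hx⟩
    | true => exact ⟨_, h.upT hz hx⟩
  · obtain ⟨t, ht, hr⟩ := hu
    rcases ht with (rfl | rfl) | ht
    · right
      exact ⟨_, (Ball.fromA hr hz).upF (fun hh => hz (mem_anc_self hh)) hx⟩
    · left
      exact Ball.toY hr _ h hz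
    · exact absurd ⟨t, ht, hr⟩ hz

theorem Ball.step {V : Type*} {D : V → V → Prop} {Z S : Set V} {A Y u x : V} {b : Bool}
    (hS : S ⊆ anc D ({A, Y} ∪ Z))
    (h : Ball D Z A u b) (hu : u ∉ Z) (hm : (moral D S).Adj u x) :
    (∃ b, Ball D Z A Y b) ∨ ∃ b, Ball D Z A x b := by
  have : u ∈ S ∧ (D u x ∨ D x u ∨ ∃ w ∈ S, D u w ∧ D x w) := by
    rw [moral, SimpleGraph.fromRel_adj] at hm
    rcases hm.2 with ⟨h1, _, h3⟩ | ⟨h1, h2, h3⟩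
    · exact ⟨h1, h3⟩
    · refine ⟨h2, ?_⟩
      rcases h3 with h3 | h3 | ⟨w, hw, h3, h4⟩
      · exact .inr (.inl h3)
      · exact .inl h3
      · exact .inr (.inr ⟨w, hw, h4, h3⟩)
  obtain ⟨huS, h1 | h1 | ⟨w, hw, h1, h2⟩⟩ := this
  · exact .inr ⟨_, h.down hu h1⟩
  · exact h.up (hS huS) h1 (fun _ => hu)
  · exact (h.down hu h1).up (hS hw) h2 (fun hh => by cases hh)

theorem Ball.chain {V : Type*} {D : V → V → Prop} {Z S : Set V} {A Y : V}
    (hS : S ⊆ anc D ({A, Y} ∪ Z)) (p : List V) : ∀ u b, Ball D Z A u b →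
    List.IsChain (moral D S).Adj (u :: p) → (u :: p).getLast? = some Y →
    (∀ x ∈ u :: p, x ∉ Z) → ∃ b, Ball D Z A Y b := by
  induction p with
  | nil =>
    intro u b h _ hl _
    simp at hl
    exact ⟨b, hl ▸ h⟩
  | cons x p ih =>
    intro u b h hc hl hz
    rw [List.isChain_cons_cons] at hc
    rcases h.step (Y := Y) hS (hz u (by simp)) hc.1 with h' | ⟨b', h'⟩
    · exact h'
    · exact ih x b' h' hc.2 (by simpa [List.getLast?_cons_cons] using hl)
        (fun y hy => hz y (List.mem_cons_of_mem _ hy))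

theorem OW.forward {V : Type*} {D : V → V → Prop} {Z : Set V} {w : ℕ → V} {n i : ℕ}
    (h : OW D Z w n) (hi : D (w i) (w (i+1))) (d : ℕ) : i + d + 1 ≤ n →
    w i ∈ anc D Z ∨ (ReflTransGen D (w i) (w (i+d+1)) ∧ D (w (i+d)) (w (i+d+1))) := by
  induction d with
  | zero => intro _; exact .inr ⟨.single hi, hi⟩
  | succ d ih =>
    intro hd
    rcases ih (by omega) with h1 | ⟨h1, h2⟩
    · exact .inl h1
    · rcases h.2 (i+d) (by omega) with hc | hc
      · exact .inl (anc_step h1 hc.2.2)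
      · have h3 : D (w (i+d+1)) (w (i+d+1+1)) := by
          rcases h.1 (i+d+1) (by omega) with h3 | h3
          · exact h3
          · exact absurd ⟨h2, h3⟩ hc.1
        exact .inr ⟨h1.tail h3, h3⟩

theorem OW.cut {V : Type*} {D : V → V → Prop} {Z : Set V} {w : ℕ → V} {n i e : ℕ}
    (hac : ∀ x y, D x y → ¬ D y x)
    (h : OW D Z w n) (hij : i + (e + 1) ≤ n) (hw : w i = w (i + (e + 1))) :
    OW D Z (fun k => if k ≤ i then w k else w (k + (e + 1))) (n - (e + 1)) := by
  set w' : ℕ → V := fun k => if k ≤ i then w k else w (k + (e + 1)) with hw'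
  have lo : ∀ k, k ≤ i → w' k = w k := fun k hk => by simp [hw', hk]
  have hi : ∀ k, i ≤ k → w' k = w (k + (e + 1)) := fun k hk => by
    rcases Nat.eq_or_lt_of_le hk with h1 | h1
    · subst h1; rw [lo _ le_rfl, hw]
    · have : ¬ k ≤ i := by omega
      simp [hw', this]
  constructor
  · intro k hk
    rcases Nat.lt_or_ge k i with h1 | h1
    · rw [lo k (by omega), lo (k+1) (by omega)]; exact h.1 k (by omega)
    · rw [hi k h1, hi (k+1) (by omega)]
      have := h.1 (k + (e+1)) (by omega)
      rwa [show k + (e + 1) + 1 = k + 1 + (e + 1) by omega] at this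
  · intro k hk
    rcases Nat.lt_or_ge k i with h1 | h1
    · rcases Nat.lt_or_ge (k+1) i with h2 | h2
      · rw [lo k (by omega), lo (k+1) (by omega), lo (k+2) (by omega)]
        exact h.2 k (by omega)
      · have : i = k + 1 := by omega
        subst this
        rw [lo k (by omega), lo (k+1) (by omega), hi (k+2) (by omega)]
        have c1 := h.2 k (by omega)
        have c2 := h.2 (k + 1 + e) (by omega)
        have f := h.forward (i := k + 1)
        rw [show k + 1 + e + 1 = k + 1 + (e + 1) by omega, ← hw,
          show k + 1 + e + 2 = k + 2 + (e + 1) by omega] at c2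
        by_cases hcol : D (w k) (w (k+1)) ∧ D (w (k + 2 + (e+1))) (w (k+1))
        · left
          refine ⟨hcol.1, hcol.2, ?_⟩
          rcases c1 with c1 | c1
          · exact c1.2.2
          rcases c2 with c2 | c2
          · exact c2.2.2
          have d1 : D (w (k+1)) (w (k+1+1)) := by
            rcases h.1 (k+1) (by omega) with h3 | h3
            · exact h3
            · exact absurd ⟨hcol.1, h3⟩ c1.1
          rcases f d1 e (by omega) with f | f
          · exact f
          · rw [show k + 1 + e + 1 = k + 1 + (e + 1) by omega, ← hw] at f
            exact absurd ⟨f.2, hcol.2⟩ c2.1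
        · right
          refine ⟨hcol, ?_⟩
          rcases c1 with c1 | c1
          · rcases c2 with c2 | c2
            · exact absurd ⟨c1.1, c2.2.1⟩ hcol
            · exact c2.2
          · exact c1.2
    · rw [hi k h1, hi (k+1) (by omega), hi (k+2) (by omega)]
      have := h.2 (k + (e+1)) (by omega)
      rwa [show k + (e + 1) + 1 = k + 1 + (e + 1) by omega,
        show k + (e + 1) + 2 = k + 2 + (e + 1) by omega] at this

theorem OW.exists_inj {V : Type*} {D : V → V → Prop} {Z : Set V} {A Y : V}
    (hac : ∀ x y, D x y → ¬ D y x)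
    (h : ∃ (n : ℕ) (w : ℕ → V), w 0 = A ∧ w n = Y ∧ OW D Z w n) :
    ∃ (n : ℕ) (w : ℕ → V), w 0 = A ∧ w n = Y ∧ OW D Z w n ∧
      ∀ i j, i < j → j ≤ n → w i ≠ w j := by
  classical
  obtain ⟨w, h0, hn, ho⟩ := Nat.find_spec h
  refine ⟨Nat.find h, w, h0, hn, ho, ?_⟩
  intro i j hij hj heq
  obtain ⟨e, rfl⟩ : ∃ e, j = i + (e + 1) := ⟨j - i - 1, by omega⟩
  refine Nat.find_min h (m := Nat.find h - (e+1)) (by omega)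
    ⟨_, ?_, ?_, ho.cut hac hj heq⟩
  · simpa using h0
  · by_cases hh : Nat.find h - (e+1) ≤ i
    · have : Nat.find h - (e+1) = i := by omega
      simp only [this, le_refl, if_true]
      rw [heq, show i + (e + 1) = Nat.find h by omega, hn]
    · simp only [hh, if_false]
      rw [show Nat.find h - (e+1) + (e + 1) = Nat.find h by omega, hn]

theorem not_dsep_of_walk {V : Type*} [Fintype V] [DecidableEq V]
    {D : V → V → Prop} {Z : Set V} {A Y : V}
    (hac : ∀ x y, D x y → ¬ D y x)
    (h : ∃ (n : ℕ) (w : ℕ → V), w 0 = A ∧ w n = Y ∧ OW D Z w n) :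
    ¬ DSep D {A} {Y} Z := by
  intro hd
  obtain ⟨n, w, h0, hn, ho, hinj⟩ := OW.exists_inj hac h
  have key : ∀ x y z, InteriorAt ((List.range (n+1)).map w) x y z → TCond D Z x y z := by
    rintro x y z ⟨s, t, hst⟩
    have hlen := congrArg List.length hst
    simp at hlen
    have g : ∀ k, k < n + 1 → (s ++ x :: y :: z :: t)[k]? = some (w k) := by
      intro k hk
      rw [← hst]
      simp [hk]
    have g0 := g s.length (by omega)
    have g1 := g (s.length+1) (by omega)
    have g2 := g (s.length+2) (by omega)
    simp at g0 g1 g2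
    rw [g0, g1, g2]
    exact ho.2 _ (by omega)
  have hpath : IsPath (fun a b => D a b ∨ D b a) A Y ((List.range (n+1)).map w) := by
    refine ⟨?_, ?_, ?_, ?_⟩
    · show List.IsChain _ _
      rw [List.isChain_iff_getElem]
      intro i hi
      simp at hi ⊢
      exact ho.1 i (by omega)
    · simp [List.head?_range, h0]
    · simp [List.range_succ, hn]
    · refine List.Nodup.map_on ?_ List.nodup_range
      intro i hi j hj hw
      simp at hi hj
      rcases lt_trichotomy i j with hl | hl | hl
      · exact absurd hw (hinj i j hl (by omega))
      · exact hl
      · exact absurd hw.symm (hinj j i hl (by omega))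
  rcases hd A rfl Y rfl _ hpath with
    ⟨x, y, z, hi, h1, h2⟩ | ⟨x, y, z, hi, h1, h2⟩
  · rcases key x y z hi with c | c
    · exact h1 ⟨c.1, c.2.1⟩
    · exact c.2 h2
  · rcases key x y z hi with c | c
    · obtain ⟨t, ht, hr⟩ := c.2.2
      exact h2 t ⟨y, rfl, hr⟩ ht
    · exact c.1 h1

theorem anc_pbd {V : Type*} [Fintype V] [DecidableEq V] {D : V → V → Prop} {A Y u t : V}
    (hr : ReflTransGen D u t) :
    ReflTransGen (pbd D A Y) u t ∨ (ReflTransGen (pbd D A Y) u A ∧ ReflTransGen D A t) := by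
  induction hr using ReflTransGen.head_induction_on with
  | refl => exact .inl .refl
  | @head a c h1 h2 ih =>
    by_cases ha : a = A
    · subst ha
      exact .inr ⟨.refl, .head h1 h2⟩
    · have h : pbd D A Y a c := ⟨h1, fun hh => ha hh.1⟩
      rcases ih with ih | ih
      · exact .inl (.head h ih)
      · exact .inr ⟨.head h ih.1, ih.2⟩

/-- Proposition 4, part 1 (statement 6): if `(L, N)` is admissible then `A` and `Y`
are not adjacent in `H¹`. -/
theorem stmt6 {V : Type*} [Fintype V] [DecidableEq V]
    (D : V → V → Prop) (hacy : Acyclic D)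
    (A Y : V) (L N : Set V)
    (hAY : A ≠ Y) (hAancY : Relation.ReflTransGen D A Y)
    (hLnd : L ∩ desc D {A} = ∅) (hLY : Y ∉ L)
    (hN : {A, Y} ∪ L ⊆ N)
    (hadm : Admissible D A Y L N) :
    ¬ (H1 D A Y L N).Adj A Y := by
  obtain ⟨Z, hd, hf, hLZ, hZN⟩ := hadm
  have hac : ∀ x y, pbd D A Y x y → ¬ pbd D A Y y x := fun x y h1 h2 =>
    hacy x y h1.1 (.single h2.1)
  have hAL : A ∉ L := fun h => by
    have : A ∈ L ∩ desc D {A} := ⟨h, A, rfl, .refl⟩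
    rw [hLnd] at this
    exact this
  have hfz : ∀ x ∈ forb D A Y, x ∉ Z := fun x h1 h2 => by
    have : x ∈ Z ∩ forb D A Y := ⟨h2, h1⟩
    rw [hf] at this
    exact this
  have hAZ : A ∉ Z := hfz A (.inr rfl)
  have hYZ : Y ∉ Z := hfz Y (.inl ⟨Y, ⟨hAY.symm, hAancY, .refl⟩, .refl⟩)
  have hIZ : ∀ x ∈ Ignore D A Y L N, x ∉ Z := by
    rintro x ⟨_, h | h⟩ hz
    · exact h.2 (hZN hz)
    · exact hfz x h hz
  have hS : ancAYL D A Y L ⊆ anc (pbd D A Y) ({A, Y} ∪ Z) := by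
    rintro u ⟨t, ht, hr⟩
    rcases anc_pbd (A := A) (Y := Y) hr with h | h
    · refine ⟨t, ?_, h⟩
      rcases ht with ht | ht
      · exact .inl ht
      · exact .inr (hLZ ht)
    · exact ⟨A, .inl (.inl rfl), h.1⟩
  intro hadj
  have hp : ∃ p : List V, IsPath (H0 D A Y L).Adj A Y p ∧
      ∀ x ∈ p, x ≠ A → x ≠ Y → x ∈ Ignore D A Y L N := by
    rw [H1, SimpleGraph.fromRel_adj] at hadj
    rcases hadj.2 with ⟨_, _, h | h | h⟩ | ⟨_, _, h | h | h⟩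
    · exact h
    · exact absurd h.2 hLY
    · exact absurd h.1 hAY
    · obtain ⟨p, ⟨h1, h2, h3, h4⟩, h5⟩ := h
      refine ⟨p.reverse, ⟨?_, ?_, ?_, ?_⟩, ?_⟩
      · have h1' : List.IsChain (H0 D A Y L).Adj p := h1
        show List.IsChain _ _
        rw [List.isChain_reverse]
        exact h1'.imp (fun a b hab => hab.symm)
      · simpa using h3
      · simpa using h2
      · simpa using h4
      · intro x hx ha hy
        exact h5 x (by simpa using hx) hy ha
    · exact absurd h.1.symm hAY
    · exact absurd h.2 hAL
  obtain ⟨p, ⟨h1, h2, h3, _⟩, h5⟩ := hp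
  have hpz : ∀ x ∈ p, x ∉ Z := by
    intro x hx
    by_cases ha : x = A
    · exact ha ▸ hAZ
    by_cases hy : x = Y
    · exact hy ▸ hYZ
    exact hIZ x (h5 x hx ha hy)
  cases p with
  | nil => simp at h2
  | cons a p =>
    simp at h2
    subst h2
    obtain ⟨b, hb⟩ := Ball.chain hS p a false .start h1 h3 hpz
    obtain ⟨n, w, w0, wn, ho, _⟩ := hb.walk hac
    exact not_dsep_of_walk hac ⟨n, w, w0, wn, ho⟩ hd

end CausalGraph
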